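/- Fix L₉, the lattice with basis H, E₁, …, E₉ and K = −3H + E₁ + ⋯ + E₉, together with reduced area data h, e₁, …, e₉. Let F₁, …, F₈ be classes in L₉ such that: (i) each F_k has the form a_kH − (a_k − 1)E_{j₁} − E_{j₂} − ⋯ − E_{j_{2a_k+2}} for some integer 0 ≤ a_k ≤ 3 and distinct indices j₁, …, j_{2a_k+2} (so F_k·F_k = −2 and K·F_k = 0); (ii) F_j·F_k = 0 for all j ≠ k; (iii) there are real numbers δ₁, δ₂ with δ₂ < δ₁ < 2δ₂, 7δ₁ < 3h − Σᵢ eᵢ and 7δ₂ < 3h − Σᵢ eᵢ, such that exactly one F_k has area ω(F_k) = δ₁ and the remaining seven have area ω(F_k) = δ₂. Then, up to reordering F₁, …, F₈, one of the following holds: (a) there are distinct indices i₁, …, i₈ ∈ {1,…,9} with F₁ = 3H − 2E_{i₁} − E_{i₂} − ⋯ − E_{i₈}, F₂ = H − E_{i₂} − E_{i₃} − E_{i₄}, F₃ = H − E_{i₂} − E_{i₅} − E_{i₆}, F₄ = H − E_{i₂} − E_{i₇} − E_{i₈}, F₅ = H − E_{i₃} − E_{i₅} − E_{i₇}, F₆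 = H − E_{i₃} − E_{i₆} − E_{i₈}, F₇ = H − E_{i₄} − E_{i₅} − E_{i₈}, F₈ = H − E_{i₄} − E_{i₆} − E_{i₇}; (b) there are distinct indices l₁, …, l₉ ∈ {1,…,9} with F₁ = H − E_{l₁} − E_{l₂} − E_{l₃}, F₂ = H − E_{l₁} − E_{l₄} − E_{l₅}, F₃ = H − E_{l₁} − E_{l₆} − E_{l₇}, F₄ = H − E_{l₂} − E_{l₄} − E_{l₆}, F₅ = H − E_{l₃} − E_{l₅} − E_{l₆}, F₆ = H − E_{l₂} − E_{l₅} − E_{l₇}, F₇ = H − E_{l₃} − E_{l₄} − E_{l₇}, F₈ = E_{l₈} − E_{l₉}; or (c) there are distinct indices l₁, …, l₉ ∈ {1,…,9} with F₁ = H − E_{l₁} − E_{l₂} − E_{l₃}, F₂ = H − E_{l₁} − E_{l₄} − E_{l₅}, F₃ = H − E_{l₁} − E_{l₆} − E_{l₇}, F₄ = H − E_{l₁} − E_{l₈} − E_{l₉}, F₅ = E_{l₂} − E_{l₃}, F₆ = E_{l₄} − E_{l₅}, F₇ = E_{l₆} − E_{l₇}, F₈ = E_{l₈} − E_{l₉}.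 (This is Lemma 5.1 of the paper at the homological level: the classification of the classes of eight disjoint symplectic (−2)-spheres in CP² # 9CP²‾ under the stated area constraints; hypothesis (i) is the form guaranteed by Lemma 3.6 under the area condition ω(F_k) < −ω(K).) -/

import Mathlib

/-!
Classes of the lattice `L₉ = ℤ⟨H, E₁, …, E₉⟩` are encoded as pairs `(a, v)`
representing `aH + Σᵢ vᵢEᵢ`; the intersection form is
`(a, v)·(a', v') = a·a' − Σᵢ vᵢv'ᵢ`, and given reduced area data `h, e`,
the area of `(a, v)` is `a·h + Σᵢ vᵢeᵢ` (so `aH − Σᵢ bᵢEᵢ` has area `a·h − Σᵢ bᵢeᵢ`).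
-/

/-- Intersection number in `L₉`. -/
def interL9 (A B : ℤ × (Fin 9 → ℤ)) : ℤ :=
  A.1 * B.1 - ∑ i, A.2 i * B.2 i

/-- Area of a class, given reduced area data `(h, e)`. -/
noncomputable def areaL9 (h : ℝ) (e : Fin 9 → ℝ) (A : ℤ × (Fin 9 → ℤ)) : ℝ :=
  (A.1 : ℝ) * h + ∑ i, (A.2 i : ℝ) * e i

/-- The class `H − Eᵢ − Eⱼ − E_k`. -/
def lineL9 (i j k : Fin 9) : ℤ × (Fin 9 → ℤ) :=
  (1, fun x => if x = i ∨ x = j ∨ x = k then -1 else 0)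

/-- The class `Eᵢ − Eⱼ`. -/
def diffL9 (i j : Fin 9) : ℤ × (Fin 9 → ℤ) :=
  (0, fun x => if x = i then 1 else if x = j then -1 else 0)

/-- The class `3H − 2E_{i₁} − E_{i₂} − ⋯ − E_{i₈}` for `i : Fin 8 → Fin 9` injective. -/
def cubicL9 (i : Fin 8 → Fin 9) : ℤ × (Fin 9 → ℤ) :=
  (3, fun x => if x = i 0 then -2 else if x ∈ Finset.univ.image i then -1 else 0)

/-- Table of allowed intersections: bit `x` tells whether `x = n &&& m` is allowed for the codes
`n, m` of two orthogonal roots (bit `9` of a code marks a line). -/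
def goodTab : ℕ := 1552518092300708935148979488462502555261448457734318806357940540033281935524335649182018618950623637642199512707422539663962449906744345597973740669706596474710138851678314140392440117298876059358537631765958933948332651828079427305

def compat (n m : ℕ) : Bool :=
  Nat.beq (Nat.land 1 (Nat.shiftRight goodTab (Nat.land n m))) 1

/-- Code of a line. -/
def enc3 (a b c : ℕ) : ℕ :=
  Nat.lor 512 (Nat.lor (Nat.pow 2 a) (Nat.lor (Nat.pow 2 b) (Nat.pow 2 c)))

/-- Code of a difference. -/
def enc2 (a b : ℕ) : ℕ := Nat.lor (Nat.pow 2 a) (Nat.pow 2 b)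

noncomputable def memb (x : ℕ) (l : List ℕ) : Bool :=
  List.rec false (fun y _ ih => Bool.rec ih true (Nat.beq x y)) l

noncomputable def allIn (s : List ℕ) (l : List ℕ) : Bool :=
  List.rec true (fun x _ ih => Bool.rec false ih (memb x s)) l

noncomputable def fil (f : ℕ → Bool) (l : List ℕ) : List ℕ → List ℕ :=
  List.rec (fun acc => acc) (fun x _ ih acc => Bool.rec (ih acc) (ih (x :: acc)) (f x)) l

noncomputable def longEnough (n : ℕ) : List ℕ → Bool :=
  Nat.rec (fun _ => true) (fun _ ih l => List.rec false (fun _ t _ => ih t) l) n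

noncomputable def tailsAll (n : ℕ) (f : ℕ → List ℕ → Bool) (l : List ℕ) : Bool :=
  List.rec true (fun x l ih =>
    Bool.rec true (Bool.rec false ih (f x l)) (longEnough n l)) l

def shapesB (l : Fin 9 → ℕ) : List ℕ :=
  [enc3 (l 0) (l 1) (l 2), enc3 (l 0) (l 3) (l 4), enc3 (l 0) (l 5) (l 6), enc3 (l 1) (l 3) (l 5),
   enc3 (l 2) (l 4) (l 5), enc3 (l 1) (l 4) (l 6), enc3 (l 2) (l 3) (l 6), enc2 (l 7) (l 8)]

def shapesC (l : Fin 9 → ℕ) : List ℕ :=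
  [enc3 (l 0) (l 1) (l 2), enc3 (l 0) (l 3) (l 4), enc3 (l 0) (l 5) (l 6), enc3 (l 0) (l 7) (l 8),
   enc2 (l 1) (l 2), enc2 (l 3) (l 4), enc2 (l 5) (l 6), enc2 (l 7) (l 8)]

def fullLab (l : Fin 9 → ℕ) : Bool :=
  Nat.beq (Nat.lor (Nat.pow 2 (l 0)) (Nat.lor (Nat.pow 2 (l 1)) (Nat.lor (Nat.pow 2 (l 2))
    (Nat.lor (Nat.pow 2 (l 3)) (Nat.lor (Nat.pow 2 (l 4)) (Nat.lor (Nat.pow 2 (l 5))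
    (Nat.lor (Nat.pow 2 (l 6)) (Nat.lor (Nat.pow 2 (l 7)) (Nat.pow 2 (l 8)))))))))) 511

def hi (q : ℕ) : ℕ := Nat.log2 q
def rest (q : ℕ) : ℕ := Nat.xor q (Nat.pow 2 (Nat.log2 q))

noncomputable def okB (cl : List ℕ) (l : Fin 9 → ℕ) : Bool :=
  match fullLab l with
  | false => false
  | true => allIn (shapesB l) cl

noncomputable def okC (cl : List ℕ) (l : Fin 9 → ℕ) : Bool :=
  match fullLab l with
  | false => false
  | true => allIn (shapesC l) cl

/-- first code (other than `t`) of the list that contains all bits of `m`, bits of `m` removed -/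
def findWith (t m : ℕ) : List ℕ → ℕ
  | [] => 0
  | x :: l => match Nat.beq x t with
    | true => findWith t m l
    | false => match Nat.beq (Nat.land x m) m with
      | true => Nat.xor x m
      | false => findWith t m l

def labB (t q : ℕ) (cl : List ℕ) : Fin 9 → ℕ :=
  let t' := Nat.xor t 512
  let a := hi t'
  let b := hi (rest t')
  let c := hi (rest (rest t'))
  let u := findWith t (Nat.lor 512 (Nat.pow 2 a)) cl
  let d := hi u
  let e := hi (rest u)
  let f := hi (findWith t (Nat.lor 512 (Nat.lor (Nat.pow 2 b) (Nat.pow 2 d))) cl)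
  let g := hi (Nat.xor 511 (Nat.lor q (Nat.lor t' (Nat.lor u (Nat.pow 2 f)))))
  ![a, b, c, d, e, f, g, hi q, hi (rest q)]

def labC (q1 q2 q3 q4 : ℕ) : Fin 9 → ℕ :=
  ![hi (Nat.xor 511 (Nat.lor q1 (Nat.lor q2 (Nat.lor q3 q4)))), hi q1, hi (rest q1),
    hi q2, hi (rest q2), hi q3, hi (rest q3), hi q4, hi (rest q4)]

def firstT : List ℕ → ℕ
  | [] => 0
  | t :: l => match Nat.ble 512 t with
    | false => firstT l
    | true => t

noncomputable def leaf (cl : List ℕ) : Bool :=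
  match fil (fun q => Nat.ble q 511) cl [] with
  | [q] => okB cl (labB (firstT cl) q cl)
  | [q1, q2, q3, q4] => okC cl (labC q1 q2 q3 q4)
  | _ => false

noncomputable def go (n : ℕ) : List ℕ → List ℕ → Bool :=
  Nat.rec (fun _ acc => leaf acc)
    (fun n ih cs acc => tailsAll n (fun c l => ih (fil (compat c) l []) (c :: acc)) cs) n

def cands : List ℕ :=
  [3, 5, 6, 9, 10, 12, 17, 18, 20, 24, 33, 34, 36, 40, 48, 65, 66, 68, 72, 80, 96, 129, 130,
   132, 136, 144, 160, 192, 257, 258, 260, 264, 272, 288, 320, 384, 519, 523, 525, 526, 531,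
   533, 534, 537, 538, 540, 547, 549, 550, 553, 554, 556, 561, 562, 564, 568, 579, 581, 582,
   585, 586, 588, 593, 594, 596, 600, 609, 610, 612, 616, 624, 643, 645, 646, 649, 650, 652,
   657, 658, 660, 664, 673, 674, 676, 680, 688, 705, 706, 708, 712, 720, 736, 771, 773, 774,
   777, 778, 780, 785, 786, 788, 792, 801, 802, 804, 808, 816, 833, 834, 836, 840, 848, 864,
   897, 898, 900, 904, 912, 928, 960]

theorem go_true : go 8 cands [] = true := by decide +kernel

theorem memb_iff (x : ℕ) (l : List ℕ) : memb x l = true ↔ x ∈ l := by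
  induction l with
  | nil => simp [memb]
  | cons y l ih =>
    have : memb x (y :: l) = Bool.rec (memb x l) true (Nat.beq x y) := rfl
    rw [this, List.mem_cons]
    cases hb : Nat.beq x y with
    | true => simp [Nat.eq_of_beq_eq_true hb]
    | false => simp [ih, Nat.ne_of_beq_eq_false hb]

theorem allIn_sound (s l : List ℕ) (h : allIn s l = true) : ∀ x ∈ l, x ∈ s := by
  induction l with
  | nil => simp
  | cons y l ih =>
    have e : allIn s (y :: l) = Bool.rec false (allIn s l) (memb y s) := rfl
    rw [e] at h
    cases hb : memb y s with
    | true =>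
      rw [hb] at h
      intro x hx
      rcases List.mem_cons.1 hx with rfl | hx
      · exact (memb_iff _ _).1 hb
      · exact ih h x hx
    | false => rw [hb] at h; cases h

theorem mem_fil (f : ℕ → Bool) (x : ℕ) (l : List ℕ) : ∀ acc,
    ((x ∈ l ∧ f x = true) ∨ x ∈ acc) → x ∈ fil f l acc := by
  induction l with
  | nil => intro acc h; simpa [fil] using h
  | cons y l ih =>
    intro acc h
    have e : fil f (y :: l) acc = Bool.rec (fil f l acc) (fil f l (y :: acc)) (f y) := rfl
    rw [e]
    cases hb : f y with
    | true =>
      apply ih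
      rcases h with ⟨h1, h2⟩ | h
      · rcases List.mem_cons.1 h1 with rfl | h1
        · simp
        · exact Or.inl ⟨h1, h2⟩
      · simp [h]
    | false =>
      apply ih
      rcases h with ⟨h1, h2⟩ | h
      · rcases List.mem_cons.1 h1 with rfl | h1
        · rw [hb] at h2; cases h2
        · exact Or.inl ⟨h1, h2⟩
      · simp [h]

theorem longEnough_sound (n : ℕ) : ∀ l : List ℕ, n ≤ l.length → longEnough n l = true := by
  induction n with
  | zero => intro l _; rfl
  | succ n ih =>
    intro l hl
    cases l with
    | nil => simp at hl
    | cons y l => exact ih l (by simpa using hl)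

theorem go_sound (n : ℕ) : ∀ (cs acc : List ℕ), go n cs acc = true →
    ∀ S : Finset ℕ, S.card = n → (∀ x ∈ S, x ∈ cs) →
      (∀ x ∈ S, ∀ y ∈ S, x ≠ y → compat x y = true) →
      ∃ L : List ℕ, (∀ x, x ∈ L ↔ x ∈ S ∨ x ∈ acc) ∧ leaf L = true := by
  induction n with
  | zero =>
    intro cs acc h S hS _ _
    rw [Finset.card_eq_zero] at hS
    subst hS
    exact ⟨acc, by simp, h⟩
  | succ n ih =>
    intro cs acc h S hS hsub hc
    have e : go (n + 1) cs acc
        = tailsAll n (fun c l => go n (fil (compat c) l []) (c :: acc)) cs := rfl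
    rw [e] at h
    clear e
    induction cs with
    | nil =>
      exfalso
      have : S = ∅ := Finset.eq_empty_of_forall_notMem (fun x hx => by simpa using hsub x hx)
      simp [this] at hS
    | cons c l ihl =>
      have e : tailsAll n (fun c l => go n (fil (compat c) l []) (c :: acc)) (c :: l)
        = Bool.rec true (Bool.rec false (tailsAll n (fun c l => go n (fil (compat c) l []) (c :: acc)) l)
            (go n (fil (compat c) l []) (c :: acc))) (longEnough n l) := rfl
      rw [e] at h
      have hlen : longEnough n l = true := by
        apply longEnough_sound
        have h1 : S ⊆ (c :: l).toFinset := fun x hx => by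
          rw [List.mem_toFinset]; exact hsub x hx
        have h2 := Finset.card_le_card h1
        have h3 := List.toFinset_card_le (c :: l)
        simp only [List.length_cons] at h3
        omega
      rw [hlen] at h
      cases hg : go n (fil (compat c) l []) (c :: acc) with
      | false => rw [hg] at h; cases h
      | true =>
        rw [hg] at h
        by_cases hcS : c ∈ S
        · obtain ⟨L, hL, hleaf⟩ := ih _ _ hg (S.erase c)
            (by rw [Finset.card_erase_of_mem hcS, hS]; rfl)
            (fun x hx => by
              have hx1 := Finset.mem_of_mem_erase hx
              have hx2 := Finset.ne_of_mem_erase hx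
              apply mem_fil
              left
              refine ⟨?_, hc c hcS x hx1 hx2.symm⟩
              rcases List.mem_cons.1 (hsub x hx1) with h | h
              · exact absurd h hx2
              · exact h)
            (fun x hx y hy => hc x (Finset.mem_of_mem_erase hx) y (Finset.mem_of_mem_erase hy))
          refine ⟨L, fun x => ?_, hleaf⟩
          rw [hL, Finset.mem_erase, List.mem_cons]
          by_cases hxc : x = c
          · subst hxc; simp [hcS]
          · simp [hxc]
        · exact ihl h (fun x hx => by
            rcases List.mem_cons.1 (hsub x hx) with h | h
            · exact absurd (h ▸ hx) hcS
            · exact h)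

theorem fullLab_sound (l : Fin 9 → ℕ) (h : fullLab l = true) :
    ∃ l' : Fin 9 → Fin 9, Function.Injective l' ∧ ∀ i, l i = l' i := by
  have h := Nat.eq_of_beq_eq_true h
  change 2 ^ (l 0) ||| (2 ^ (l 1) ||| (2 ^ (l 2) ||| (2 ^ (l 3) ||| (2 ^ (l 4) ||| (2 ^ (l 5) |||
    (2 ^ (l 6) ||| (2 ^ (l 7) ||| 2 ^ (l 8)))))))) = 511 at h
  have key : ∀ x, Nat.testBit 511 x = true ↔ ∃ i, l i = x := by
    intro x
    rw [← h]
    simp only [Nat.testBit_or, Nat.testBit_two_pow, Bool.or_eq_true, decide_eq_true_eq,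
      Fin.exists_fin_succ]
    simp
  have hlt : ∀ i, l i < 9 := by
    intro i
    have h1 := (key (l i)).2 ⟨i, rfl⟩
    by_contra hcon
    have : Nat.testBit (2 ^ 9 - 1) (l i) = true := h1
    rw [Nat.testBit_two_pow_sub_one] at this
    simp at this
    omega
  refine ⟨fun i => ⟨l i, hlt i⟩, ?_, fun i => rfl⟩
  apply Finite.injective_iff_surjective.2
  intro x
  have : Nat.testBit (2 ^ 9 - 1) x = true := by
    rw [Nat.testBit_two_pow_sub_one]; simp
  obtain ⟨i, hi⟩ := (key x).1 this
  exact ⟨i, Fin.ext hi⟩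

theorem leaf_sound (L : List ℕ) (h : leaf L = true) :
    ∃ l : Fin 9 → Fin 9, Function.Injective l ∧
      ((∀ x ∈ L, x ∈ shapesB (fun i => l i)) ∨ (∀ x ∈ L, x ∈ shapesC (fun i => l i))) := by
  have aux : ∀ l : Fin 9 → ℕ, fullLab l = true →
      (allIn (shapesB l) L = true ∨ allIn (shapesC l) L = true) →
      ∃ l : Fin 9 → Fin 9, Function.Injective l ∧
      ((∀ x ∈ L, x ∈ shapesB (fun i => l i)) ∨ (∀ x ∈ L, x ∈ shapesC (fun i => l i))) := by
    intro l hl ho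
    obtain ⟨l', hinj, he⟩ := fullLab_sound l hl
    have he' : l = fun i => (l' i : ℕ) := funext he
    refine ⟨l', hinj, ?_⟩
    rw [← he']
    exact ho.imp (allIn_sound _ _) (allIn_sound _ _)
  unfold leaf at h
  split at h
  · unfold okB at h
    split at h
    · cases h
    · exact aux _ (by assumption) (Or.inl h)
  · unfold okC at h
    split at h
    · cases h
    · exact aux _ (by assumption) (Or.inr h)
  · cases h

theorem classify (n : Fin 8 → ℕ) (hinj : Function.Injective n) (hc : ∀ k, n k ∈ cands)
    (hcomp : ∀ j k, j ≠ k → compat (n j) (n k) = true) :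
    ∃ (σ : Equiv.Perm (Fin 8)) (l : Fin 9 → Fin 9), Function.Injective l ∧
      ((∀ j : Fin 8, (shapesB (fun i => l i))[j]? = some (n (σ j))) ∨
       (∀ j : Fin 8, (shapesC (fun i => l i))[j]? = some (n (σ j)))) := by
  obtain ⟨L, hL, hleaf⟩ := go_sound 8 cands [] go_true (Finset.univ.image n)
    (by rw [Finset.card_image_of_injective _ hinj]; rfl)
    (by intro x hx; simp only [Finset.mem_image] at hx; obtain ⟨k, _, rfl⟩ := hx; exact hc k)
    (by
      intro x hx y hy hxy
      simp only [Finset.mem_image] at hx hy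
      obtain ⟨j, _, rfl⟩ := hx
      obtain ⟨k, _, rfl⟩ := hy
      exact hcomp j k (fun h => hxy (by rw [h])))
  obtain ⟨l, hl, h⟩ := leaf_sound L hleaf
  have aux : ∀ s : List ℕ, s.length = 8 → (∀ x ∈ L, x ∈ s) →
      ∃ σ : Equiv.Perm (Fin 8), ∀ j : Fin 8, s[j]? = some (n (σ j)) := by
    intro s hs h
    have h1 : ∀ k, ∃ j : Fin 8, s[j]? = some (n k) := by
      intro k
      have := h (n k) ((hL _).2 (Or.inl (by simp)))
      obtain ⟨i, hi, he⟩ := List.mem_iff_getElem.1 this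
      exact ⟨⟨i, by omega⟩, by simp [he, hi]⟩
    choose τ hτ using h1
    have hτi : Function.Injective τ := by
      intro a b hab
      have := hτ a
      rw [hab, hτ b] at this
      exact hinj (Option.some.inj this).symm
    let σ := Equiv.ofBijective τ (Finite.injective_iff_bijective.1 hτi)
    refine ⟨σ.symm, fun j => ?_⟩
    have := hτ (σ.symm j)
    rw [← this]
    congr 1
    have h2 : σ (σ.symm j) = j := by simp
    simp [show τ (σ.symm j) = j from h2]
  rcases h with h | h
  · obtain ⟨σ, hσ⟩ := aux _ rfl h
    exact ⟨σ, l, hl, Or.inl hσ⟩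
  · obtain ⟨σ, hσ⟩ := aux _ rfl h
    exact ⟨σ, l, hl, Or.inr hσ⟩

/-! ### From classes to codes -/

/-- `-K`. -/
def antiK : ℤ × (Fin 9 → ℤ) := (3, fun _ => -1)

/-- `-K - (H - Eᵢ - Eⱼ - E_k)`. -/
def conicL9 (i j k : Fin 9) : ℤ × (Fin 9 → ℤ) := antiK - lineL9 i j k

/-- `-K - (Eᵢ - Eⱼ)`. -/
def cubL9 (i j : Fin 9) : ℤ × (Fin 9 → ℤ) := antiK - diffL9 i j

def isLine (A : ℤ × (Fin 9 → ℤ)) (n : ℕ) (a b c : Fin 9) : Prop :=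
  a ≠ b ∧ a ≠ c ∧ b ≠ c ∧ n = enc3 a b c ∧ (A = lineL9 a b c ∨ A = conicL9 a b c)

def isDiff (A : ℤ × (Fin 9 → ℤ)) (n : ℕ) (a b : Fin 9) : Prop :=
  a ≠ b ∧ n = enc2 a b ∧ (A = diffL9 a b ∨ A = cubL9 a b)

theorem exists_code (A : ℤ × (Fin 9 → ℤ))
    (hA : ∃ (a : ℤ) (j : Fin 9) (S : Finset (Fin 9)),
      0 ≤ a ∧ a ≤ 3 ∧ j ∉ S ∧ (S.card : ℤ) = 2 * a + 1 ∧
      A.1 = a ∧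
      A.2 = fun x => if x = j then -(a - 1) else if x ∈ S then -1 else 0) :
    ∃ n, (∃ a b c, isLine A n a b c) ∨ (∃ a b, isDiff A n a b) := by
  obtain ⟨a, j, S, h0, h3, hj, hS, h1, h2⟩ := hA
  have hcompl : (insert j S)ᶜ.card = 9 - (S.card + 1) := by
    rw [Finset.card_compl, Finset.card_insert_of_notMem hj]; rfl
  have hmem : ∀ x, x ∈ (insert j S)ᶜ ↔ x ≠ j ∧ x ∉ S := by
    intro x; simp
  interval_cases a
  · have hS1 : S.card = 1 := by omega
    obtain ⟨s, rfl⟩ := Finset.card_eq_one.1 hS1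
    refine ⟨_, Or.inr ⟨j, s, by simpa using hj, rfl, Or.inl ?_⟩⟩
    refine Prod.ext h1 ?_
    rw [h2]
    funext x
    simp [diffL9]
  · have hS1 : S.card = 3 := by omega
    obtain ⟨a, b, c, hab, hac, hbc, rfl⟩ := Finset.card_eq_three.1 hS1
    refine ⟨_, Or.inl ⟨a, b, c, hab, hac, hbc, rfl, Or.inl ?_⟩⟩
    refine Prod.ext h1 ?_
    rw [h2]
    funext x
    simp only [lineL9, Finset.mem_insert, Finset.mem_singleton] at hj ⊢
    by_cases hx : x = j
    · subst hx; simp [hj]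
    · simp [hx]
  · have hS1 : (insert j S)ᶜ.card = 3 := by omega
    obtain ⟨a, b, c, hab, hac, hbc, he⟩ := Finset.card_eq_three.1 hS1
    refine ⟨_, Or.inl ⟨a, b, c, hab, hac, hbc, rfl, Or.inr ?_⟩⟩
    refine Prod.ext (by rw [h1]; rfl) ?_
    rw [h2]
    funext x
    have hx := hmem x
    rw [he] at hx
    simp only [Finset.mem_insert, Finset.mem_singleton] at hx
    simp only [conicL9, antiK, lineL9, Prod.snd_sub, Pi.sub_apply]
    simp only [hx]
    by_cases h1 : x = j <;> by_cases h2 : x ∈ S <;> simp [h1, h2]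
  · have hS1 : (insert j S)ᶜ.card = 1 := by omega
    obtain ⟨s, he⟩ := Finset.card_eq_one.1 hS1
    have hsj := hmem s
    rw [he] at hsj
    simp only [Finset.mem_singleton, true_iff] at hsj
    refine ⟨_, Or.inr ⟨j, s, hsj.1.symm, rfl, Or.inr ?_⟩⟩
    refine Prod.ext (by rw [h1]; rfl) ?_
    rw [h2]
    funext x
    have hx := hmem x
    rw [he] at hx
    simp only [Finset.mem_singleton] at hx
    simp only [cubL9, antiK, diffL9, Prod.snd_sub, Pi.sub_apply]
    simp only [hx]
    by_cases h1 : x = j <;> by_cases h2 : x ∈ S <;> simp [h1, h2]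

theorem enc3_eq (a b c : ℕ) : enc3 a b c = 2 ^ 9 ||| (2 ^ a ||| (2 ^ b ||| 2 ^ c)) := rfl
theorem enc2_eq (a b : ℕ) : enc2 a b = 2 ^ a ||| 2 ^ b := rfl

theorem enc3_bit (a b c x : Fin 9) : (enc3 a b c).testBit x = true ↔ x = a ∨ x = b ∨ x = c := by
  rw [enc3_eq]
  simp only [Nat.testBit_or, Nat.testBit_two_pow, Bool.or_eq_true, decide_eq_true_eq, Fin.ext_iff]
  omega

theorem enc2_bit (a b x : Fin 9) : (enc2 a b).testBit x = true ↔ x = a ∨ x = b := by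
  rw [enc2_eq]
  simp only [Nat.testBit_or, Nat.testBit_two_pow, Bool.or_eq_true, decide_eq_true_eq, Fin.ext_iff]
  omega

theorem enc3_nine (a b c : Fin 9) : (enc3 a b c).testBit 9 = true := by
  rw [enc3_eq]
  simp only [Nat.testBit_or, Nat.testBit_two_pow, Bool.or_eq_true, decide_eq_true_eq]
  exact Or.inl trivial

theorem enc2_nine (a b : Fin 9) : (enc2 a b).testBit 9 = false := by
  rw [enc2_eq, Bool.eq_false_iff]
  simp only [ne_eq, Nat.testBit_or, Nat.testBit_two_pow, Bool.or_eq_true, decide_eq_true_eq]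
  omega

theorem enc3_mem : ∀ a b c : Fin 9, a ≠ b → a ≠ c → b ≠ c → enc3 a b c ∈ cands := by
  decide +kernel

theorem enc2_mem : ∀ a b : Fin 9, a ≠ b → enc2 a b ∈ cands := by
  decide +kernel

theorem cands_lt : ∀ x ∈ cands, x < 1024 := by decide +kernel

/-- Number of points of a code. -/
def pop (n : ℕ) : ℤ := ∑ i : Fin 9, if n.testBit i then 1 else 0

theorem good_spec : ∀ x < 1024, (x.testBit 9 = true → pop x = 1) → (x.testBit 9 = false → pop x ≠ 1) →
    Nat.beq (Nat.land 1 (Nat.shiftRight goodTab x)) 1 = true := by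
  decide +kernel

theorem line_not_self : ∀ a b c : Fin 9, a ≠ b → a ≠ c → b ≠ c →
    compat (enc3 a b c) (enc3 a b c) = false := by
  decide +kernel

theorem diff_self : ∀ a b : Fin 9, a ≠ b →
    interL9 (diffL9 a b) (diffL9 a b) ≠ 0 ∧ interL9 (diffL9 a b) (diffL9 b a) ≠ 0 := by
  decide +kernel

theorem enc2_inj (a b c d : Fin 9) (hab : a ≠ b) (h : enc2 a b = enc2 c d) :
    (a = c ∧ b = d) ∨ (a = d ∧ b = c) := by
  have h1 := enc2_bit a b
  rw [h] at h1
  have ha := (h1 a).2 (Or.inl rfl)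
  have hb := (h1 b).2 (Or.inr rfl)
  rw [enc2_bit] at ha hb
  rcases ha with ha | ha <;> rcases hb with hb | hb
  · exact absurd (ha.trans hb.symm) hab
  · exact Or.inl ⟨ha, hb⟩
  · exact Or.inr ⟨ha, hb⟩
  · exact absurd (ha.trans hb.symm) hab

theorem line_congr (a b c a' b' c' : Fin 9) (h : enc3 a b c = enc3 a' b' c') :
    lineL9 a b c = lineL9 a' b' c' := by
  refine Prod.ext rfl ?_
  funext x
  have h1 := enc3_bit a b c x
  rw [h, enc3_bit] at h1
  simp only [lineL9, h1]

theorem line_anti : ∀ a b c : Fin 9, a ≠ b → a ≠ c → b ≠ c → interL9 antiK (lineL9 a b c) = 0 := by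
  decide +kernel

theorem diff_anti : ∀ a b : Fin 9, a ≠ b → interL9 antiK (diffL9 a b) = 0 := by
  decide +kernel

theorem inter_comm (A B : ℤ × (Fin 9 → ℤ)) : interL9 A B = interL9 B A := by
  simp only [interL9, mul_comm]

theorem inter_sub (A B C : ℤ × (Fin 9 → ℤ)) :
    interL9 (A - B) C = interL9 A C - interL9 B C := by
  simp only [interL9, Prod.fst_sub, Prod.snd_sub, Pi.sub_apply, sub_mul, Finset.sum_sub_distrib]
  ring

theorem anti_anti : interL9 antiK antiK = 0 := by decide +kernel

/-- orthogonality passes to the underlying roots -/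
theorem inter_root (A B R R' : ℤ × (Fin 9 → ℤ)) (hA : A = R ∨ A = antiK - R)
    (hB : B = R' ∨ B = antiK - R') (hR : interL9 antiK R = 0) (hR' : interL9 antiK R' = 0)
    (h : interL9 A B = 0) : interL9 R R' = 0 := by
  have e1 := inter_comm antiK R
  have e2 := inter_comm antiK R'
  have e3 := inter_comm R R'
  have e4 := anti_anti
  rcases hA with rfl | rfl <;> rcases hB with rfl | rfl
  · exact h
  · rw [inter_comm, inter_sub] at h; omega
  · rw [inter_sub] at h; omega
  · rw [inter_sub, inter_comm antiK, inter_sub, inter_comm R (antiK - R'), inter_sub] at h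
    omega

theorem pop_land (n m : ℕ) : pop (Nat.land n m) =
    ∑ i : Fin 9, (if n.testBit i then 1 else 0) * (if m.testBit i then 1 else 0) := by
  unfold pop
  refine Finset.sum_congr rfl fun i _ => ?_
  change (if (n &&& m).testBit i then (1 : ℤ) else 0) = _
  rw [Nat.testBit_and]
  cases n.testBit i <;> cases m.testBit i <;> simp

theorem compat_of (n m : ℕ) (hn : n < 1024)
    (h1 : (n.testBit 9 = true ∧ m.testBit 9 = true) → pop (Nat.land n m) = 1)
    (h2 : ¬ (n.testBit 9 = true ∧ m.testBit 9 = true) → pop (Nat.land n m) ≠ 1) :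
    compat n m = true := by
  have hb : (Nat.land n m).testBit 9 = (n.testBit 9 && m.testBit 9) := Nat.testBit_and n m 9
  apply good_spec
  · exact lt_of_le_of_lt (Nat.and_le_left) hn
  · rw [hb, Bool.and_eq_true]; exact h1
  · rw [hb, Bool.and_eq_false_iff]
    intro h
    apply h2
    rintro ⟨h3, h4⟩
    simp [h3, h4] at h

theorem line_snd (a b c x : Fin 9) :
    (lineL9 a b c).2 x = -(if (enc3 a b c).testBit x then 1 else 0) := by
  have := enc3_bit a b c x
  by_cases h : x = a ∨ x = b ∨ x = c
  · rw [if_pos (this.2 h)]; simp only [lineL9]; rw [if_pos h]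
  · rw [if_neg (fun hh => h (this.1 hh))]; simp only [lineL9]; rw [if_neg h]; rfl

theorem diff_snd (a b x : Fin 9) (hab : a ≠ b) :
    (diffL9 a b).2 x = (if (enc2 a b).testBit x then 1 else 0) - 2 * (if x = b then 1 else 0) := by
  have := enc2_bit a b x
  simp only [this, diffL9]
  by_cases h : x = a
  · subst h; simp [hab]
  · by_cases h' : x = b <;> simp [h, h', hab.symm]

theorem line_line_pop (a b c a' b' c' : Fin 9)
    (h : interL9 (lineL9 a b c) (lineL9 a' b' c') = 0) :
    pop (Nat.land (enc3 a b c) (enc3 a' b' c')) = 1 := by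
  rw [pop_land]
  simp only [interL9, line_snd, neg_mul_neg] at h
  simp only [lineL9] at h
  omega

theorem line_diff_pop (a b c a' b' : Fin 9) (hab : a' ≠ b')
    (h : interL9 (lineL9 a b c) (diffL9 a' b') = 0) :
    pop (Nat.land (enc3 a b c) (enc2 a' b')) ≠ 1 := by
  rw [pop_land]
  simp only [interL9, line_snd, diff_snd _ _ _ hab, mul_sub, Finset.sum_sub_distrib, neg_mul,
    Finset.sum_neg_distrib, mul_left_comm _ (2 : ℤ), ← Finset.mul_sum] at h
  simp only [diffL9, mul_zero] at h
  omega

theorem diff_diff_pop (a b a' b' : Fin 9) (hab : a ≠ b) (hab' : a' ≠ b')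
    (h : interL9 (diffL9 a b) (diffL9 a' b') = 0) :
    pop (Nat.land (enc2 a b) (enc2 a' b')) ≠ 1 := by
  rw [pop_land]
  simp only [interL9, diff_snd _ _ _ hab, diff_snd _ _ _ hab', mul_sub, sub_mul,
    Finset.sum_sub_distrib, mul_left_comm _ (2 : ℤ), mul_assoc, ← Finset.mul_sum] at h
  simp only [diffL9, mul_zero] at h
  omega

theorem land_comm' (n m : ℕ) : Nat.land n m = Nat.land m n := Nat.land_comm n m

/-- orthogonal classes have distinct compatible codes -/
theorem compat_of_perp (A B : ℤ × (Fin 9 → ℤ)) (n m : ℕ)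
    (hA : (∃ a b c, isLine A n a b c) ∨ (∃ a b, isDiff A n a b))
    (hB : (∃ a b c, isLine B m a b c) ∨ (∃ a b, isDiff B m a b))
    (h : interL9 A B = 0) : n ≠ m ∧ compat n m = true := by
  rcases hA with ⟨a, b, c, h1, h2, h3, rfl, hA⟩ | ⟨a, b, h1, rfl, hA⟩ <;>
    rcases hB with ⟨a', b', c', h1', h2', h3', rfl, hB⟩ | ⟨a', b', h1', rfl, hB⟩
  · have hr := inter_root _ _ _ _ hA hB (line_anti _ _ _ h1 h2 h3) (line_anti _ _ _ h1' h2' h3') h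
    have hc : compat (enc3 a b c) (enc3 a' b' c') = true :=
      compat_of _ _ (cands_lt _ (enc3_mem _ _ _ h1 h2 h3)) (fun _ => line_line_pop _ _ _ _ _ _ hr)
        (fun hh => absurd ⟨enc3_nine _ _ _, enc3_nine _ _ _⟩ hh)
    refine ⟨fun he => ?_, hc⟩
    rw [← he, line_not_self _ _ _ h1 h2 h3] at hc
    cases hc
  · have hr := inter_root _ _ _ _ hA hB (line_anti _ _ _ h1 h2 h3) (diff_anti _ _ h1') h
    refine ⟨fun he => ?_, compat_of _ _ (cands_lt _ (enc3_mem _ _ _ h1 h2 h3)) ?_ ?_⟩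
    · have := enc3_nine a b c
      rw [he, enc2_nine] at this
      cases this
    · rintro ⟨_, hh⟩
      rw [enc2_nine] at hh
      cases hh
    · intro _
      exact line_diff_pop _ _ _ _ _ h1' hr
  · rw [inter_comm] at h
    have hr := inter_root _ _ _ _ hB hA (line_anti _ _ _ h1' h2' h3') (diff_anti _ _ h1) h
    refine ⟨fun he => ?_, compat_of _ _ (cands_lt _ (enc2_mem _ _ h1)) ?_ ?_⟩
    · have := enc3_nine a' b' c'
      rw [← he, enc2_nine] at this
      cases this
    · rintro ⟨hh, _⟩
      rw [enc2_nine] at hh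
      cases hh
    · intro _
      rw [land_comm']
      exact line_diff_pop _ _ _ _ _ h1 hr
  · have hr := inter_root _ _ _ _ hA hB (diff_anti _ _ h1) (diff_anti _ _ h1') h
    refine ⟨fun he => ?_, compat_of _ _ (cands_lt _ (enc2_mem _ _ h1)) ?_ ?_⟩
    · rcases enc2_inj _ _ _ _ h1 he with ⟨rfl, rfl⟩ | ⟨rfl, rfl⟩
      · exact (diff_self _ _ h1).1 hr
      · exact (diff_self _ _ h1).2 hr
    · rintro ⟨hh, _⟩
      rw [enc2_nine] at hh
      cases hh
    · intro _
      exact diff_diff_pop _ _ _ _ h1 h1' hr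

/-- A class whose code is that of a line is a line or a conic. -/
theorem line_of_code (A : ℤ × (Fin 9 → ℤ)) (n : ℕ) (a b c : Fin 9)
    (hA : (∃ a b c, isLine A n a b c) ∨ (∃ a b, isDiff A n a b)) (hn : n = enc3 a b c) :
    A = lineL9 a b c ∨ A = conicL9 a b c := by
  subst hn
  rcases hA with ⟨a', b', c', _, _, _, he, hA⟩ | ⟨a', b', _, he, hA⟩
  · rw [conicL9, line_congr _ _ _ _ _ _ he]; exact hA
  · have := enc3_nine a b c
    rw [he, enc2_nine] at this
    cases this

theorem diff_of_code (A : ℤ × (Fin 9 → ℤ)) (n : ℕ) (a b : Fin 9) (hab : a ≠ b)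
    (hA : (∃ a b c, isLine A n a b c) ∨ (∃ a b, isDiff A n a b)) (hn : n = enc2 a b) :
    (A = diffL9 a b ∨ A = cubL9 a b) ∨ (A = diffL9 b a ∨ A = cubL9 b a) := by
  subst hn
  rcases hA with ⟨a', b', c', _, _, _, he, hA⟩ | ⟨a', b', _, he, hA⟩
  · have := enc3_nine a' b' c'
    rw [← he, enc2_nine] at this
    cases this
  · rcases enc2_inj _ _ _ _ hab he with ⟨rfl, rfl⟩ | ⟨rfl, rfl⟩
    · exact Or.inl hA
    · exact Or.inr hA

/-! ### Areas -/

theorem area_sub (h : ℝ) (e : Fin 9 → ℝ) (A B : ℤ × (Fin 9 → ℤ)) :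
    areaL9 h e (A - B) = areaL9 h e A - areaL9 h e B := by
  simp only [areaL9, Prod.fst_sub, Prod.snd_sub, Pi.sub_apply, Int.cast_sub, sub_mul,
    Finset.sum_sub_distrib]
  ring

theorem area_anti (h : ℝ) (e : Fin 9 → ℝ) : areaL9 h e antiK = 3 * h - ∑ i, e i := by
  simp [areaL9, antiK, sub_eq_add_neg]

theorem area_line (h : ℝ) (e : Fin 9 → ℝ) (a b c : Fin 9) (hab : a ≠ b) (hac : a ≠ c)
    (hbc : b ≠ c) : areaL9 h e (lineL9 a b c) = h - e a - e b - e c := by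
  have h1 : ∀ x, ((lineL9 a b c).2 x : ℝ) * e x =
      -((if x = a then e x else 0) + (if x = b then e x else 0) + (if x = c then e x else 0)) := by
    intro x
    simp only [lineL9]
    by_cases h1 : x = a
    · subst h1; simp [hab, hac]
    · by_cases h2 : x = b
      · subst h2; simp [h1, hbc]
      · by_cases h3 : x = c <;> simp [h1, h2, h3]
        subst h3; simp [h1, h2]
  simp only [areaL9, h1]
  simp [Finset.sum_add_distrib, lineL9]
  ring

theorem area_diff (h : ℝ) (e : Fin 9 → ℝ) (a b : Fin 9) (hab : a ≠ b) :
    areaL9 h e (diffL9 a b) = e a - e b := by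
  have h1 : ∀ x, ((diffL9 a b).2 x : ℝ) * e x =
      (if x = a then e x else 0) - (if x = b then e x else 0) := by
    intro x
    simp only [diffL9]
    by_cases h1 : x = a
    · subst h1; simp [hab]
    · by_cases h2 : x = b <;> simp [h1, h2]
      subst h2; simp [h1]
  simp only [areaL9, h1]
  simp [diffL9]

/-- The area data, read in a labelling of the nine points. -/
structure AreaData (h d1 d2 : ℝ) (x : Fin 9 → ℝ) : Prop where
  tri : ∀ i j k : Fin 9, i ≠ j → i ≠ k → j ≠ k → 0 ≤ h - x i - x j - x k
  lt21 : d2 < d1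
  lt12 : d1 < 2 * d2
  bound : 7 * d1 < 3 * h -
    (x 0 + x 1 + x 2 + x 3 + x 4 + x 5 + x 6 + x 7 + x 8)

theorem tri_false {h d1 d2 : ℝ} {x : Fin 9 → ℝ} (D : AreaData h d1 d2 x)
    (l : Fin 9 → Fin 9) (hl : Function.Injective l)
    (κ : ℝ) (hκ : κ = 3 * h - (x (l 0) + x (l 1) + x (l 2) + x (l 3) + x (l 4) + x (l 5) + x (l 6)
      + x (l 7) + x (l 8)))
    (hb : 7 * d1 < κ)
    (h0 : κ - d1 ≤ h - x (l 0) - x (l 1) - x (l 2))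
    (h1 : κ - d1 ≤ h - x (l 0) - x (l 3) - x (l 4))
    (h2 : κ - d1 ≤ h - x (l 1) - x (l 3) - x (l 5)) : False := by
  have T : ∀ i j k : Fin 9, i ≠ j → i ≠ k → j ≠ k → 0 ≤ h - x (l i) - x (l j) - x (l k) :=
    fun i j k h1 h2 h3 => D.tri _ _ _ (hl.ne h1) (hl.ne h2) (hl.ne h3)
  have t1 := T 2 6 7 (by decide) (by decide) (by decide)
  have t2 := T 0 6 8 (by decide) (by decide) (by decide)
  have t3 := T 2 4 8 (by decide) (by decide) (by decide)
  have t4 := T 4 5 6 (by decide) (by decide) (by decide)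
  have t5 := T 1 7 8 (by decide) (by decide) (by decide)
  have t6 := T 0 7 8 (by decide) (by decide) (by decide)
  linarith

theorem flipC_line {h d1 d2 : ℝ} {x : Fin 9 → ℝ} (D : AreaData h d1 d2 x)
    (l : Fin 9 → Fin 9) (hl : Function.Injective l)
    (κ : ℝ) (hκ : κ = 3 * h - (x (l 0) + x (l 1) + x (l 2) + x (l 3) + x (l 4) + x (l 5) + x (l 6)
      + x (l 7) + x (l 8)))
    (h0 : κ - d1 ≤ h - x (l 0) - x (l 1) - x (l 2))
    (h5 : d2 ≤ x (l 3) - x (l 4)) (h6 : d2 ≤ x (l 5) - x (l 6)) : False := by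
  have T : ∀ i j k : Fin 9, i ≠ j → i ≠ k → j ≠ k → 0 ≤ h - x (l i) - x (l j) - x (l k) :=
    fun i j k h1 h2 h3 => D.tri _ _ _ (hl.ne h1) (hl.ne h2) (hl.ne h3)
  have t1 := T 3 5 7 (by decide) (by decide) (by decide)
  have t2 := T 3 5 8 (by decide) (by decide) (by decide)
  linarith [D.lt12]

theorem flipC_diff {h d1 d2 : ℝ} {x : Fin 9 → ℝ} (D : AreaData h d1 d2 x)
    (l : Fin 9 → Fin 9) (hl : Function.Injective l)
    (κ : ℝ) (hκ : κ = 3 * h - (x (l 0) + x (l 1) + x (l 2) + x (l 3) + x (l 4) + x (l 5) + x (l 6)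
      + x (l 7) + x (l 8)))
    (h4 : κ - d1 ≤ x (l 1) - x (l 2))
    (h2 : d2 ≤ h - x (l 0) - x (l 5) - x (l 6))
    (h5 : d2 ≤ x (l 3) - x (l 4)) : False := by
  have T : ∀ i j k : Fin 9, i ≠ j → i ≠ k → j ≠ k → 0 ≤ h - x (l i) - x (l j) - x (l k) :=
    fun i j k h1 h2 h3 => D.tri _ _ _ (hl.ne h1) (hl.ne h2) (hl.ne h3)
  have t1 := T 1 3 7 (by decide) (by decide) (by decide)
  have t2 := T 1 3 8 (by decide) (by decide) (by decide)
  linarith [D.lt12]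

theorem allC {h d1 d2 : ℝ} {x : Fin 9 → ℝ} (D : AreaData h d1 d2 x)
    (κ : ℝ) (hκ : κ = 3 * h - (x 0 + x 1 + x 2 + x 3 + x 4 + x 5 + x 6 + x 7 + x 8))
    (s : Fin 8 → ℝ) (hs : ∀ j, d2 ≤ s j ∧ s j ≤ d1)
    (h0 : h - x 0 - x 1 - x 2 = s 0 ∨ h - x 0 - x 1 - x 2 = κ - s 0)
    (h1 : h - x 0 - x 3 - x 4 = s 1 ∨ h - x 0 - x 3 - x 4 = κ - s 1)
    (h2 : h - x 0 - x 5 - x 6 = s 2 ∨ h - x 0 - x 5 - x 6 = κ - s 2)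
    (h3 : h - x 0 - x 7 - x 8 = s 3 ∨ h - x 0 - x 7 - x 8 = κ - s 3)
    (h4 : x 1 - x 2 = s 4 ∨ x 1 - x 2 = κ - s 4)
    (h5 : x 3 - x 4 = s 5 ∨ x 3 - x 4 = κ - s 5)
    (h6 : x 5 - x 6 = s 6 ∨ x 5 - x 6 = κ - s 6)
    (h7 : x 7 - x 8 = s 7 ∨ x 7 - x 8 = κ - s 7) :
    ¬ (h - x 0 - x 1 - x 2 = κ - s 0) ∧ ¬ (h - x 0 - x 3 - x 4 = κ - s 1) ∧
    ¬ (h - x 0 - x 5 - x 6 = κ - s 2) ∧ ¬ (h - x 0 - x 7 - x 8 = κ - s 3) ∧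
    ¬ (x 1 - x 2 = κ - s 4) ∧ ¬ (x 3 - x 4 = κ - s 5) ∧ ¬ (x 5 - x 6 = κ - s 6) ∧
    ¬ (x 7 - x 8 = κ - s 7) := by
  have hb := D.bound
  have h12 := D.lt12
  have h21 := D.lt21
  rw [← hκ] at hb
  have lo : ∀ (y : ℝ) (j : Fin 8), (y = s j ∨ y = κ - s j) → d2 ≤ y := by
    intro y j hy
    have := hs j
    rcases hy with hy | hy <;> linarith
  have l0 := lo _ _ h0
  have l1 := lo _ _ h1
  have l2 := lo _ _ h2
  have l3 := lo _ _ h3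
  have l4 := lo _ _ h4
  have l5 := lo _ _ h5
  have l6 := lo _ _ h6
  have l7 := lo _ _ h7
  have s0 := (hs 0).2
  have s1 := (hs 1).2
  have s2 := (hs 2).2
  have s3 := (hs 3).2
  have s4 := (hs 4).2
  have s5 := (hs 5).2
  have s6 := (hs 6).2
  have s7 := (hs 7).2
  have i0 : Function.Injective (![0, 1, 2, 3, 4, 5, 6, 7, 8] : Fin 9 → Fin 9) := by decide
  have i1 : Function.Injective (![0, 3, 4, 5, 6, 7, 8, 1, 2] : Fin 9 → Fin 9) := by decide
  have i2 : Function.Injective (![0, 5, 6, 7, 8, 1, 2, 3, 4] : Fin 9 → Fin 9) := by decide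
  have i3 : Function.Injective (![0, 7, 8, 1, 2, 3, 4, 5, 6] : Fin 9 → Fin 9) := by decide
  refine ⟨?_, ?_, ?_, ?_, ?_, ?_, ?_, ?_⟩ <;> intro hf
  · exact flipC_line D _ i0 κ (by simp; linarith) (by simp; linarith) (by simp; linarith) (by simp; linarith)
  · exact flipC_line D _ i1 κ (by simp; linarith) (by simp; linarith) (by simp; linarith) (by simp; linarith)
  · exact flipC_line D _ i2 κ (by simp; linarith) (by simp; linarith) (by simp; linarith) (by simp; linarith)
  · exact flipC_line D _ i3 κ (by simp; linarith) (by simp; linarith) (by simp; linarith) (by simp; linarith)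
  · exact flipC_diff D _ i0 κ (by simp; linarith) (by simp; linarith) (by simp; linarith) (by simp; linarith)
  · exact flipC_diff D _ i1 κ (by simp; linarith) (by simp; linarith) (by simp; linarith) (by simp; linarith)
  · exact flipC_diff D _ i2 κ (by simp; linarith) (by simp; linarith) (by simp; linarith) (by simp; linarith)
  · exact flipC_diff D _ i3 κ (by simp; linarith) (by simp; linarith) (by simp; linarith) (by simp; linarith)

/-- In the Fano case the first line cannot be a conic. -/
theorem flipB_line0 {h d1 d2 : ℝ} {x : Fin 9 → ℝ} (D : AreaData h d1 d2 x)
    (κ : ℝ) (hκ : κ = 3 * h - (x 0 + x 1 + x 2 + x 3 + x 4 + x 5 + x 6 + x 7 + x 8))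
    (s : Fin 8 → ℝ) (q : Fin 8) (hs : ∀ j, s j = if j = q then d1 else d2)
    (h0 : h - x 0 - x 1 - x 2 = κ - s 0)
    (h1 : h - x 0 - x 3 - x 4 = s 1 ∨ h - x 0 - x 3 - x 4 = κ - s 1)
    (h2 : h - x 0 - x 5 - x 6 = s 2 ∨ h - x 0 - x 5 - x 6 = κ - s 2)
    (h3 : h - x 1 - x 3 - x 5 = s 3 ∨ h - x 1 - x 3 - x 5 = κ - s 3)
    (h4 : h - x 2 - x 4 - x 5 = s 4 ∨ h - x 2 - x 4 - x 5 = κ - s 4)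
    (h5 : h - x 1 - x 4 - x 6 = s 5 ∨ h - x 1 - x 4 - x 6 = κ - s 5)
    (h6 : h - x 2 - x 3 - x 6 = s 6 ∨ h - x 2 - x 3 - x 6 = κ - s 6)
    (h7 : x 7 - x 8 = s 7 ∨ x 7 - x 8 = κ - s 7) : False := by
  have hb := D.bound
  have h12 := D.lt12
  have h21 := D.lt21
  rw [← hκ] at hb
  have hi : ∀ j, s j ≤ d1 := by
    intro j; rw [hs]; split_ifs <;> linarith
  have s0 := hi 0
  have s1 := hi 1
  have s2 := hi 2
  have s3 := hi 3
  have s4 := hi 4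
  have s5 := hi 5
  have s6 := hi 6
  have s7 := hi 7
  -- three flipped lines in general position
  have n13 : ¬ (h - x 0 - x 3 - x 4 = κ - s 1 ∧ h - x 1 - x 3 - x 5 = κ - s 3) := fun hf =>
    tri_false D ![0, 1, 2, 3, 4, 5, 6, 7, 8] (by decide) κ (by simp; linarith) hb
      (by simp; linarith) (by simp; linarith [hf.1]) (by simp; linarith [hf.2])
  have n15 : ¬ (h - x 0 - x 3 - x 4 = κ - s 1 ∧ h - x 1 - x 4 - x 6 = κ - s 5) := fun hf =>
    tri_false D ![0, 1, 2, 4, 3, 6, 5, 7, 8] (by decide) κ (by simp; linarith) hb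
      (by simp; linarith) (by simp; linarith [hf.1]) (by simp; linarith [hf.2])
  have n14 : ¬ (h - x 0 - x 3 - x 4 = κ - s 1 ∧ h - x 2 - x 4 - x 5 = κ - s 4) := fun hf =>
    tri_false D ![0, 2, 1, 4, 3, 5, 6, 7, 8] (by decide) κ (by simp; linarith) hb
      (by simp; linarith) (by simp; linarith [hf.1]) (by simp; linarith [hf.2])
  have n16 : ¬ (h - x 0 - x 3 - x 4 = κ - s 1 ∧ h - x 2 - x 3 - x 6 = κ - s 6) := fun hf =>
    tri_false D ![0, 2, 1, 3, 4, 6, 5, 7, 8] (by decide) κ (by simp; linarith) hb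
      (by simp; linarith) (by simp; linarith [hf.1]) (by simp; linarith [hf.2])
  have n23 : ¬ (h - x 0 - x 5 - x 6 = κ - s 2 ∧ h - x 1 - x 3 - x 5 = κ - s 3) := fun hf =>
    tri_false D ![0, 1, 2, 5, 6, 3, 4, 7, 8] (by decide) κ (by simp; linarith) hb
      (by simp; linarith) (by simp; linarith [hf.1]) (by simp; linarith [hf.2])
  have n25 : ¬ (h - x 0 - x 5 - x 6 = κ - s 2 ∧ h - x 1 - x 4 - x 6 = κ - s 5) := fun hf =>
    tri_false D ![0, 1, 2, 6, 5, 4, 3, 7, 8] (by decide) κ (by simp; linarith) hb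
      (by simp; linarith) (by simp; linarith [hf.1]) (by simp; linarith [hf.2])
  have n24 : ¬ (h - x 0 - x 5 - x 6 = κ - s 2 ∧ h - x 2 - x 4 - x 5 = κ - s 4) := fun hf =>
    tri_false D ![0, 2, 1, 5, 6, 4, 3, 7, 8] (by decide) κ (by simp; linarith) hb
      (by simp; linarith) (by simp; linarith [hf.1]) (by simp; linarith [hf.2])
  have n26 : ¬ (h - x 0 - x 5 - x 6 = κ - s 2 ∧ h - x 2 - x 3 - x 6 = κ - s 6) := fun hf =>
    tri_false D ![0, 2, 1, 6, 5, 3, 4, 7, 8] (by decide) κ (by simp; linarith) hb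
      (by simp; linarith) (by simp; linarith [hf.1]) (by simp; linarith [hf.2])
  have n34 : ¬ (h - x 1 - x 3 - x 5 = κ - s 3 ∧ h - x 2 - x 4 - x 5 = κ - s 4) := fun hf =>
    tri_false D ![1, 2, 0, 5, 3, 4, 6, 7, 8] (by decide) κ (by simp; linarith) hb
      (by simp; linarith) (by simp; linarith [hf.1]) (by simp; linarith [hf.2])
  have n36 : ¬ (h - x 1 - x 3 - x 5 = κ - s 3 ∧ h - x 2 - x 3 - x 6 = κ - s 6) := fun hf =>
    tri_false D ![1, 2, 0, 3, 5, 6, 4, 7, 8] (by decide) κ (by simp; linarith) hb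
      (by simp; linarith) (by simp; linarith [hf.1]) (by simp; linarith [hf.2])
  have n54 : ¬ (h - x 1 - x 4 - x 6 = κ - s 5 ∧ h - x 2 - x 4 - x 5 = κ - s 4) := fun hf =>
    tri_false D ![1, 2, 0, 4, 6, 5, 3, 7, 8] (by decide) κ (by simp; linarith) hb
      (by simp; linarith) (by simp; linarith [hf.1]) (by simp; linarith [hf.2])
  have n56 : ¬ (h - x 1 - x 4 - x 6 = κ - s 5 ∧ h - x 2 - x 3 - x 6 = κ - s 6) := fun hf =>
    tri_false D ![1, 2, 0, 6, 4, 3, 5, 7, 8] (by decide) κ (by simp; linarith) hb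
      (by simp; linarith) (by simp; linarith [hf.1]) (by simp; linarith [hf.2])
  -- exactly one flipped line in a quadrilateral
  have q6 : ¬ (h - x 0 - x 3 - x 4 = s 1 ∧ h - x 1 - x 3 - x 5 = s 3 ∧
      h - x 2 - x 4 - x 5 = s 4) := fun hf => by
    linarith [hf.1, hf.2.1, hf.2.2, D.tri 3 4 5 (by decide) (by decide) (by decide)]
  have q5 : ¬ (h - x 0 - x 3 - x 4 = s 1 ∧ h - x 1 - x 4 - x 6 = s 5 ∧
      h - x 2 - x 3 - x 6 = s 6) := fun hf => by
    linarith [hf.1, hf.2.1, hf.2.2, D.tri 3 4 6 (by decide) (by decide) (by decide)]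
  have q4 : ¬ (h - x 0 - x 5 - x 6 = s 2 ∧ h - x 1 - x 3 - x 5 = s 3 ∧
      h - x 2 - x 3 - x 6 = s 6) := fun hf => by
    linarith [hf.1, hf.2.1, hf.2.2, D.tri 3 5 6 (by decide) (by decide) (by decide)]
  have q3 : ¬ (h - x 0 - x 5 - x 6 = s 2 ∧ h - x 1 - x 4 - x 6 = s 5 ∧
      h - x 2 - x 4 - x 5 = s 4) := fun hf => by
    linarith [hf.1, hf.2.1, hf.2.2, D.tri 4 5 6 (by decide) (by decide) (by decide)]
  -- the difference is not flipped
  have h7' : x 7 - x 8 = s 7 := by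
    rcases h7 with h7 | h7
    · exact h7
    · exfalso
      linarith [D.tri 3 4 7 (by decide) (by decide) (by decide),
        D.tri 5 6 7 (by decide) (by decide) (by decide)]
  have hcases : (h - x 0 - x 3 - x 4 = κ - s 1 ∧ h - x 0 - x 5 - x 6 = κ - s 2 ∧
        h - x 1 - x 3 - x 5 = s 3 ∧ h - x 2 - x 4 - x 5 = s 4 ∧ h - x 1 - x 4 - x 6 = s 5 ∧
        h - x 2 - x 3 - x 6 = s 6) ∨
      (h - x 1 - x 3 - x 5 = κ - s 3 ∧ h - x 1 - x 4 - x 6 = κ - s 5 ∧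
        h - x 0 - x 3 - x 4 = s 1 ∧ h - x 0 - x 5 - x 6 = s 2 ∧ h - x 2 - x 4 - x 5 = s 4 ∧
        h - x 2 - x 3 - x 6 = s 6) ∨
      (h - x 2 - x 4 - x 5 = κ - s 4 ∧ h - x 2 - x 3 - x 6 = κ - s 6 ∧
        h - x 0 - x 3 - x 4 = s 1 ∧ h - x 0 - x 5 - x 6 = s 2 ∧ h - x 1 - x 3 - x 5 = s 3 ∧
        h - x 1 - x 4 - x 6 = s 5) := by
    clear hκ hs h0 hb h12 h21 hi s0 s1 s2 s3 s4 s5 s6 s7 h7 h7' D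
    generalize (h - x 0 - x 3 - x 4 = κ - s 1) = f1 at *
    generalize (h - x 0 - x 5 - x 6 = κ - s 2) = f2 at *
    generalize (h - x 1 - x 3 - x 5 = κ - s 3) = f3 at *
    generalize (h - x 2 - x 4 - x 5 = κ - s 4) = f4 at *
    generalize (h - x 1 - x 4 - x 6 = κ - s 5) = f5 at *
    generalize (h - x 2 - x 3 - x 6 = κ - s 6) = f6 at *
    generalize (h - x 0 - x 3 - x 4 = s 1) = u1 at *
    generalize (h - x 0 - x 5 - x 6 = s 2) = u2 at *
    generalize (h - x 1 - x 3 - x 5 = s 3) = u3 at *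
    generalize (h - x 2 - x 4 - x 5 = s 4) = u4 at *
    generalize (h - x 1 - x 4 - x 6 = s 5) = u5 at *
    generalize (h - x 2 - x 3 - x 6 = s 6) = u6 at *
    grind
  have P : ∀ i j k : Fin 9, i ≠ j ∧ i ≠ k ∧ j ≠ k → 0 ≤ h - x i - x j - x k :=
    fun i j k hh => D.tri i j k hh.1 hh.2.1 hh.2.2
  have hs0 := hs 0
  have hs1 := hs 1
  have hs2 := hs 2
  have hs3 := hs 3
  have hs4 := hs 4
  have hs5 := hs 5
  have hs6 := hs 6
  have hs7 := hs 7
  clear n13 n15 n14 n16 n23 n25 n24 n26 n34 n36 n54 n56 q3 q4 q5 q6 h1 h2 h3 h4 h5 h6 h7 hs hi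
  clear s0 s1 s2 s3 s4 s5 s6 s7
  have t127 := P 1 2 7 (by decide)
  have t347 := P 3 4 7 (by decide)
  have t567 := P 5 6 7 (by decide)
  have t027 := P 0 2 7 (by decide)
  have t357 := P 3 5 7 (by decide)
  have t467 := P 4 6 7 (by decide)
  have t017 := P 0 1 7 (by decide)
  have t457 := P 4 5 7 (by decide)
  have t367 := P 3 6 7 (by decide)
  have t078 := P 0 7 8 (by decide)
  have t178 := P 1 7 8 (by decide)
  have t278 := P 2 7 8 (by decide)
  have t378 := P 3 7 8 (by decide)
  have t478 := P 4 7 8 (by decide)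
  have t578 := P 5 7 8 (by decide)
  have t678 := P 6 7 8 (by decide)
  rcases hcases with ⟨a1, a2, a3, a4, a5, a6⟩ | ⟨a1, a2, a3, a4, a5, a6⟩ | ⟨a1, a2, a3, a4, a5, a6⟩ <;>
    fin_cases q <;> simp at hs0 hs1 hs2 hs3 hs4 hs5 hs6 hs7 <;> linarith

/-- In the Fano case no line is a conic. -/
theorem allB {h d1 d2 : ℝ} {x : Fin 9 → ℝ} (D : AreaData h d1 d2 x)
    (κ : ℝ) (hκ : κ = 3 * h - (x 0 + x 1 + x 2 + x 3 + x 4 + x 5 + x 6 + x 7 + x 8))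
    (s : Fin 8 → ℝ) (q : Fin 8) (hs : ∀ j, s j = if j = q then d1 else d2)
    (h0 : h - x 0 - x 1 - x 2 = s 0 ∨ h - x 0 - x 1 - x 2 = κ - s 0)
    (h1 : h - x 0 - x 3 - x 4 = s 1 ∨ h - x 0 - x 3 - x 4 = κ - s 1)
    (h2 : h - x 0 - x 5 - x 6 = s 2 ∨ h - x 0 - x 5 - x 6 = κ - s 2)
    (h3 : h - x 1 - x 3 - x 5 = s 3 ∨ h - x 1 - x 3 - x 5 = κ - s 3)
    (h4 : h - x 2 - x 4 - x 5 = s 4 ∨ h - x 2 - x 4 - x 5 = κ - s 4)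
    (h5 : h - x 1 - x 4 - x 6 = s 5 ∨ h - x 1 - x 4 - x 6 = κ - s 5)
    (h6 : h - x 2 - x 3 - x 6 = s 6 ∨ h - x 2 - x 3 - x 6 = κ - s 6)
    (h7 : x 7 - x 8 = s 7 ∨ x 7 - x 8 = κ - s 7) :
    ¬ (h - x 0 - x 1 - x 2 = κ - s 0) ∧ ¬ (h - x 0 - x 3 - x 4 = κ - s 1) ∧
    ¬ (h - x 0 - x 5 - x 6 = κ - s 2) ∧ ¬ (h - x 1 - x 3 - x 5 = κ - s 3) ∧
    ¬ (h - x 2 - x 4 - x 5 = κ - s 4) ∧ ¬ (h - x 1 - x 4 - x 6 = κ - s 5) ∧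
    ¬ (h - x 2 - x 3 - x 6 = κ - s 6) := by
  have key : ∀ (l : Equiv.Perm (Fin 9)) (τ : Equiv.Perm (Fin 8)), l 7 = 7 → l 8 = 8 → τ 7 = 7 →
      h - x (l 0) - x (l 1) - x (l 2) = κ - s (τ 0) →
      (h - x (l 0) - x (l 3) - x (l 4) = s (τ 1) ∨ h - x (l 0) - x (l 3) - x (l 4) = κ - s (τ 1)) →
      (h - x (l 0) - x (l 5) - x (l 6) = s (τ 2) ∨ h - x (l 0) - x (l 5) - x (l 6) = κ - s (τ 2)) →
      (h - x (l 1) - x (l 3) - x (l 5) = s (τ 3) ∨ h - x (l 1) - x (l 3) - x (l 5) = κ - s (τ 3)) →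
      (h - x (l 2) - x (l 4) - x (l 5) = s (τ 4) ∨ h - x (l 2) - x (l 4) - x (l 5) = κ - s (τ 4)) →
      (h - x (l 1) - x (l 4) - x (l 6) = s (τ 5) ∨ h - x (l 1) - x (l 4) - x (l 6) = κ - s (τ 5)) →
      (h - x (l 2) - x (l 3) - x (l 6) = s (τ 6) ∨ h - x (l 2) - x (l 3) - x (l 6) = κ - s (τ 6)) →
      False := by
    intro l τ l7 l8 τ7 g0 g1 g2 g3 g4 g5 g6
    have hsum : x 0 + x 1 + x 2 + x 3 + x 4 + x 5 + x 6 + x 7 + x 8 =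
        x (l 0) + x (l 1) + x (l 2) + x (l 3) + x (l 4) + x (l 5) + x (l 6) + x (l 7) + x (l 8) := by
      have := Equiv.sum_comp l x
      simp only [Fin.sum_univ_succ, Fin.sum_univ_zero] at this
      simp at this
      have e := this.symm
      ring_nf at e ⊢
      exact e
    have D' : AreaData h d1 d2 (fun i => x (l i)) := by
      refine ⟨fun i j k a b c => D.tri _ _ _ (l.injective.ne a) (l.injective.ne b) (l.injective.ne c),
        D.lt21, D.lt12, ?_⟩
      have := D.bound
      rw [hsum] at this
      exact this
    refine flipB_line0 D' κ (by rw [hκ, hsum]) (fun j => s (τ j)) (τ.symm q) ?_ g0 g1 g2 g3 g4 g5 g6 ?_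
    · intro j
      simp only [hs, Equiv.eq_symm_apply]
    · simp only [l7, l8, τ7]
      exact h7
  have lin : ∀ {y y' : ℝ} {j j' : Fin 8}, y = κ - s j → y = y' → j = j' → y' = κ - s j' := by
    intro y y' j j' a b c; rw [← b, ← c]; exact a
  have alt : ∀ {y y' : ℝ} {j j' : Fin 8}, (y = s j ∨ y = κ - s j) → y = y' → j = j' →
      (y' = s j' ∨ y' = κ - s j') := by
    intro y y' j j' a b c; rw [← b, ← c]; exact a
  refine ⟨?_, ?_, ?_, ?_, ?_, ?_, ?_⟩ <;> intro hf
  · refine key (Equiv.ofBijective ![0, 1, 2, 3, 4, 5, 6, 7, 8] (by decide))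
      (Equiv.ofBijective ![0, 1, 2, 3, 4, 5, 6, 7] (by decide)) rfl rfl rfl
      (lin hf (by simp <;> ring) rfl) (alt h1 (by simp <;> ring) rfl) (alt h2 (by simp <;> ring) rfl) (alt h3 (by simp <;> ring) rfl) (alt h4 (by simp <;> ring) rfl) (alt h5 (by simp <;> ring) rfl) (alt h6 (by simp <;> ring) rfl)
  · refine key (Equiv.ofBijective ![0, 3, 4, 1, 2, 5, 6, 7, 8] (by decide))
      (Equiv.ofBijective ![1, 0, 2, 3, 4, 6, 5, 7] (by decide)) rfl rfl rfl
      (lin hf (by simp <;> ring) rfl) (alt h0 (by simp <;> ring) rfl) (alt h2 (by simp <;> ring) rfl) (alt h3 (by simp <;> ring) rfl) (alt h4 (by simp <;> ring) rfl) (alt h6 (by simp <;> ring) rfl) (alt h5 (by simp <;> ring) rfl)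
  · refine key (Equiv.ofBijective ![0, 5, 6, 1, 2, 3, 4, 7, 8] (by decide))
      (Equiv.ofBijective ![2, 0, 1, 3, 6, 4, 5, 7] (by decide)) rfl rfl rfl
      (lin hf (by simp <;> ring) rfl) (alt h0 (by simp <;> ring) rfl) (alt h1 (by simp <;> ring) rfl) (alt h3 (by simp <;> ring) rfl) (alt h6 (by simp <;> ring) rfl) (alt h4 (by simp <;> ring) rfl) (alt h5 (by simp <;> ring) rfl)
  · refine key (Equiv.ofBijective ![1, 3, 5, 0, 2, 4, 6, 7, 8] (by decide))
      (Equiv.ofBijective ![3, 0, 5, 1, 4, 6, 2, 7] (by decide)) rfl rfl rfl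
      (lin hf (by simp <;> ring) rfl) (alt h0 (by simp <;> ring) rfl) (alt h5 (by simp <;> ring) rfl) (alt h1 (by simp <;> ring) rfl) (alt h4 (by simp <;> ring) rfl) (alt h6 (by simp <;> ring) rfl) (alt h2 (by simp <;> ring) rfl)
  · refine key (Equiv.ofBijective ![2, 4, 5, 0, 1, 3, 6, 7, 8] (by decide))
      (Equiv.ofBijective ![4, 0, 6, 1, 3, 5, 2, 7] (by decide)) rfl rfl rfl
      (lin hf (by simp <;> ring) rfl) (alt h0 (by simp <;> ring) rfl) (alt h6 (by simp <;> ring) rfl) (alt h1 (by simp <;> ring) rfl) (alt h3 (by simp <;> ring) rfl) (alt h5 (by simp <;> ring) rfl) (alt h2 (by simp <;> ring) rfl)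
  · refine key (Equiv.ofBijective ![1, 4, 6, 0, 2, 3, 5, 7, 8] (by decide))
      (Equiv.ofBijective ![5, 0, 3, 1, 6, 4, 2, 7] (by decide)) rfl rfl rfl
      (lin hf (by simp <;> ring) rfl) (alt h0 (by simp <;> ring) rfl) (alt h3 (by simp <;> ring) rfl) (alt h1 (by simp <;> ring) rfl) (alt h6 (by simp <;> ring) rfl) (alt h4 (by simp <;> ring) rfl) (alt h2 (by simp <;> ring) rfl)
  · refine key (Equiv.ofBijective ![2, 3, 6, 0, 1, 4, 5, 7, 8] (by decide))
      (Equiv.ofBijective ![6, 0, 4, 1, 5, 3, 2, 7] (by decide)) rfl rfl rfl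
      (lin hf (by simp <;> ring) rfl) (alt h0 (by simp <;> ring) rfl) (alt h4 (by simp <;> ring) rfl) (alt h1 (by simp <;> ring) rfl) (alt h5 (by simp <;> ring) rfl) (alt h3 (by simp <;> ring) rfl) (alt h2 (by simp <;> ring) rfl)

/-! ### The final assembly -/

theorem line_swap (a b c : Fin 9) : lineL9 a b c = lineL9 a c b := by
  refine Prod.ext rfl ?_
  funext x
  simp only [lineL9, or_comm]

theorem sum_nine (x : Fin 9 → ℝ) :
    ∑ i, x i = x 0 + x 1 + x 2 + x 3 + x 4 + x 5 + x 6 + x 7 + x 8 := by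
  simp only [Fin.sum_univ_succ, Fin.sum_univ_zero]
  simp
  ring_nf

theorem sum_label (e : Fin 9 → ℝ) (l : Fin 9 → Fin 9) (hl : Function.Injective l) :
    ∑ i, e i = e (l 0) + e (l 1) + e (l 2) + e (l 3) + e (l 4) + e (l 5) + e (l 6) + e (l 7)
      + e (l 8) := by
  rw [← sum_nine (fun i => e (l i))]
  exact (Equiv.sum_comp (Equiv.ofBijective l (Finite.injective_iff_bijective.1 hl)) e).symm

theorem area_line_alt (h : ℝ) (e : Fin 9 → ℝ) (A : ℤ × (Fin 9 → ℤ)) (s : ℝ)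
    (hs : areaL9 h e A = s) (a b c : Fin 9) (hab : a ≠ b) (hac : a ≠ c) (hbc : b ≠ c) :
    (A = lineL9 a b c → h - e a - e b - e c = s) ∧
    (A = conicL9 a b c → h - e a - e b - e c = (3 * h - ∑ i, e i) - s) := by
  refine ⟨?_, ?_⟩ <;> rintro rfl
  · rw [← hs, area_line h e a b c hab hac hbc]
  · rw [← hs, conicL9, area_sub, area_anti, area_line h e a b c hab hac hbc]; ring

theorem area_diff_alt (h : ℝ) (e : Fin 9 → ℝ) (A : ℤ × (Fin 9 → ℤ)) (s : ℝ)
    (hs : areaL9 h e A = s) (a b : Fin 9) (hab : a ≠ b) :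
    (A = diffL9 a b → e a - e b = s) ∧
    (A = cubL9 a b → e a - e b = (3 * h - ∑ i, e i) - s) := by
  refine ⟨?_, ?_⟩ <;> rintro rfl
  · rw [← hs, area_diff h e a b hab]
  · rw [← hs, cubL9, area_sub, area_anti, area_diff h e a b hab]; ring

theorem areaData_of {h δ₁ δ₂ : ℝ} {e : Fin 9 → ℝ}
    (h3pt : ∀ i j k : Fin 9, i ≠ j → i ≠ k → j ≠ k → 0 ≤ h - e i - e j - e k)
    (hδ21 : δ₂ < δ₁) (hδ12 : δ₁ < 2 * δ₂) (hδ1K : 7 * δ₁ < 3 * h - ∑ i, e i)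
    (l : Fin 9 → Fin 9) (hl : Function.Injective l) :
    AreaData h δ₁ δ₂ (fun i => e (l i)) := by
  refine ⟨fun i j k a b c => h3pt _ _ _ (hl.ne a) (hl.ne b) (hl.ne c), hδ21, hδ12, ?_⟩
  rw [sum_label e l hl] at hδ1K
  exact hδ1K

theorem finalC {h δ₁ δ₂ : ℝ} {e : Fin 9 → ℝ}
    (h3pt : ∀ i j k : Fin 9, i ≠ j → i ≠ k → j ≠ k → 0 ≤ h - e i - e j - e k)
    (hδ21 : δ₂ < δ₁) (hδ12 : δ₁ < 2 * δ₂) (hδ1K : 7 * δ₁ < 3 * h - ∑ i, e i)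
    (G : Fin 8 → ℤ × (Fin 9 → ℤ)) (q : Fin 8)
    (hG : ∀ j, areaL9 h e (G j) = if j = q then δ₁ else δ₂)
    (l : Fin 9 → Fin 9) (hl : Function.Injective l)
    (g0 : G 0 = lineL9 (l 0) (l 1) (l 2) ∨ G 0 = conicL9 (l 0) (l 1) (l 2))
    (g1 : G 1 = lineL9 (l 0) (l 3) (l 4) ∨ G 1 = conicL9 (l 0) (l 3) (l 4))
    (g2 : G 2 = lineL9 (l 0) (l 5) (l 6) ∨ G 2 = conicL9 (l 0) (l 5) (l 6))
    (g3 : G 3 = lineL9 (l 0) (l 7) (l 8) ∨ G 3 = conicL9 (l 0) (l 7) (l 8))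
    (g4 : G 4 = diffL9 (l 1) (l 2) ∨ G 4 = cubL9 (l 1) (l 2))
    (g5 : G 5 = diffL9 (l 3) (l 4) ∨ G 5 = cubL9 (l 3) (l 4))
    (g6 : G 6 = diffL9 (l 5) (l 6) ∨ G 6 = cubL9 (l 5) (l 6))
    (g7 : G 7 = diffL9 (l 7) (l 8) ∨ G 7 = cubL9 (l 7) (l 8)) :
    G 0 = lineL9 (l 0) (l 1) (l 2) ∧ G 1 = lineL9 (l 0) (l 3) (l 4) ∧
    G 2 = lineL9 (l 0) (l 5) (l 6) ∧ G 3 = lineL9 (l 0) (l 7) (l 8) ∧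
    G 4 = diffL9 (l 1) (l 2) ∧ G 5 = diffL9 (l 3) (l 4) ∧
    G 6 = diffL9 (l 5) (l 6) ∧ G 7 = diffL9 (l 7) (l 8) := by
  have D := areaData_of h3pt hδ21 hδ12 hδ1K l hl
  have A3 : ∀ (j : Fin 8) (a b c : Fin 9), a ≠ b ∧ a ≠ c ∧ b ≠ c → _ := fun j a b c hh =>
    area_line_alt h e (G j) _ (hG j) (l a) (l b) (l c) (hl.ne hh.1) (hl.ne hh.2.1) (hl.ne hh.2.2)
  have A2 : ∀ (j : Fin 8) (a b : Fin 9), a ≠ b → _ := fun j a b hh =>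
    area_diff_alt h e (G j) _ (hG j) (l a) (l b) (hl.ne hh)
  have a0 := A3 0 0 1 2 (by decide)
  have a1 := A3 1 0 3 4 (by decide)
  have a2 := A3 2 0 5 6 (by decide)
  have a3 := A3 3 0 7 8 (by decide)
  have a4 := A2 4 1 2 (by decide)
  have a5 := A2 5 3 4 (by decide)
  have a6 := A2 6 5 6 (by decide)
  have a7 := A2 7 7 8 (by decide)
  obtain ⟨c0, c1, c2, c3, c4, c5, c6, c7⟩ := allC D (3 * h - ∑ i, e i)
    (by rw [sum_label e l hl]) (fun j => if j = q then δ₁ else δ₂)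
    (by intro j; split_ifs <;> constructor <;> linarith)
    (g0.imp a0.1 a0.2) (g1.imp a1.1 a1.2) (g2.imp a2.1 a2.2) (g3.imp a3.1 a3.2)
    (g4.imp a4.1 a4.2) (g5.imp a5.1 a5.2) (g6.imp a6.1 a6.2) (g7.imp a7.1 a7.2)
  exact ⟨g0.resolve_right fun w => c0 (a0.2 w), g1.resolve_right fun w => c1 (a1.2 w),
    g2.resolve_right fun w => c2 (a2.2 w), g3.resolve_right fun w => c3 (a3.2 w),
    g4.resolve_right fun w => c4 (a4.2 w), g5.resolve_right fun w => c5 (a5.2 w),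
    g6.resolve_right fun w => c6 (a6.2 w), g7.resolve_right fun w => c7 (a7.2 w)⟩

theorem finalB {h δ₁ δ₂ : ℝ} {e : Fin 9 → ℝ}
    (h3pt : ∀ i j k : Fin 9, i ≠ j → i ≠ k → j ≠ k → 0 ≤ h - e i - e j - e k)
    (hδ21 : δ₂ < δ₁) (hδ12 : δ₁ < 2 * δ₂) (hδ1K : 7 * δ₁ < 3 * h - ∑ i, e i)
    (G : Fin 8 → ℤ × (Fin 9 → ℤ)) (q : Fin 8)
    (hG : ∀ j, areaL9 h e (G j) = if j = q then δ₁ else δ₂)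
    (l : Fin 9 → Fin 9) (hl : Function.Injective l)
    (g0 : G 0 = lineL9 (l 0) (l 1) (l 2) ∨ G 0 = conicL9 (l 0) (l 1) (l 2))
    (g1 : G 1 = lineL9 (l 0) (l 3) (l 4) ∨ G 1 = conicL9 (l 0) (l 3) (l 4))
    (g2 : G 2 = lineL9 (l 0) (l 5) (l 6) ∨ G 2 = conicL9 (l 0) (l 5) (l 6))
    (g3 : G 3 = lineL9 (l 1) (l 3) (l 5) ∨ G 3 = conicL9 (l 1) (l 3) (l 5))
    (g4 : G 4 = lineL9 (l 2) (l 4) (l 5) ∨ G 4 = conicL9 (l 2) (l 4) (l 5))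
    (g5 : G 5 = lineL9 (l 1) (l 4) (l 6) ∨ G 5 = conicL9 (l 1) (l 4) (l 6))
    (g6 : G 6 = lineL9 (l 2) (l 3) (l 6) ∨ G 6 = conicL9 (l 2) (l 3) (l 6))
    (g7 : G 7 = diffL9 (l 7) (l 8) ∨ G 7 = cubL9 (l 7) (l 8)) :
    G 0 = lineL9 (l 0) (l 1) (l 2) ∧ G 1 = lineL9 (l 0) (l 3) (l 4) ∧
    G 2 = lineL9 (l 0) (l 5) (l 6) ∧ G 3 = lineL9 (l 1) (l 3) (l 5) ∧
    G 4 = lineL9 (l 2) (l 4) (l 5) ∧ G 5 = lineL9 (l 1) (l 4) (l 6) ∧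
    G 6 = lineL9 (l 2) (l 3) (l 6) := by
  have D := areaData_of h3pt hδ21 hδ12 hδ1K l hl
  have A3 : ∀ (j : Fin 8) (a b c : Fin 9), a ≠ b ∧ a ≠ c ∧ b ≠ c → _ := fun j a b c hh =>
    area_line_alt h e (G j) _ (hG j) (l a) (l b) (l c) (hl.ne hh.1) (hl.ne hh.2.1) (hl.ne hh.2.2)
  have a0 := A3 0 0 1 2 (by decide)
  have a1 := A3 1 0 3 4 (by decide)
  have a2 := A3 2 0 5 6 (by decide)
  have a3 := A3 3 1 3 5 (by decide)
  have a4 := A3 4 2 4 5 (by decide)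
  have a5 := A3 5 1 4 6 (by decide)
  have a6 := A3 6 2 3 6 (by decide)
  have a7 := area_diff_alt h e (G 7) _ (hG 7) (l 7) (l 8) (hl.ne (by decide))
  obtain ⟨c0, c1, c2, c3, c4, c5, c6⟩ := allB D (3 * h - ∑ i, e i)
    (by rw [sum_label e l hl]) (fun j => if j = q then δ₁ else δ₂) q (fun j => rfl)
    (g0.imp a0.1 a0.2) (g1.imp a1.1 a1.2) (g2.imp a2.1 a2.2) (g3.imp a3.1 a3.2)
    (g4.imp a4.1 a4.2) (g5.imp a5.1 a5.2) (g6.imp a6.1 a6.2) (g7.imp a7.1 a7.2)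
  exact ⟨g0.resolve_right fun w => c0 (a0.2 w), g1.resolve_right fun w => c1 (a1.2 w),
    g2.resolve_right fun w => c2 (a2.2 w), g3.resolve_right fun w => c3 (a3.2 w),
    g4.resolve_right fun w => c4 (a4.2 w), g5.resolve_right fun w => c5 (a5.2 w),
    g6.resolve_right fun w => c6 (a6.2 w)⟩

theorem cub_eq_cubic (l : Fin 9 → Fin 9) (hl : Function.Injective l) :
    cubL9 (l 7) (l 8) = cubicL9 (fun j => l ((![7, 0, 1, 2, 3, 4, 5, 6] : Fin 8 → Fin 9) j)) := by
  refine Prod.ext rfl ?_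
  funext x
  obtain ⟨y, rfl⟩ := (Finite.injective_iff_surjective.1 hl) x
  have hm : (l y ∈ Finset.univ.image
      (fun j => l ((![7, 0, 1, 2, 3, 4, 5, 6] : Fin 8 → Fin 9) j))) ↔ y ≠ 8 := by
    simp only [Finset.mem_image, Finset.mem_univ, true_and, hl.eq_iff]
    revert y
    decide
  simp only [cubL9, cubicL9, antiK, diffL9, Prod.snd_sub, Pi.sub_apply, hm, hl.eq_iff]
  clear hm
  revert y
  decide

/-- choose the orientation of a pair -/
theorem orient (A : ℤ × (Fin 9 → ℤ)) (l : Fin 9 → Fin 9) (a b : Fin 9)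
    (hA : (A = diffL9 (l a) (l b) ∨ A = cubL9 (l a) (l b)) ∨
      (A = diffL9 (l b) (l a) ∨ A = cubL9 (l b) (l a))) :
    ∃ c d : Fin 9, ((c = a ∧ d = b) ∨ (c = b ∧ d = a)) ∧
      (A = diffL9 (l c) (l d) ∨ A = cubL9 (l c) (l d)) := by
  rcases hA with hA | hA
  · exact ⟨a, b, Or.inl ⟨rfl, rfl⟩, hA⟩
  · exact ⟨b, a, Or.inr ⟨rfl, rfl⟩, hA⟩

theorem line_orient (B : ℤ × (Fin 9 → ℤ)) (l : Fin 9 → Fin 9) (o a b c d : Fin 9)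
    (hcd : (c = a ∧ d = b) ∨ (c = b ∧ d = a))
    (hB : B = lineL9 (l o) (l a) (l b) ∨ B = conicL9 (l o) (l a) (l b)) :
    B = lineL9 (l o) (l c) (l d) ∨ B = conicL9 (l o) (l c) (l d) := by
  rcases hcd with ⟨rfl, rfl⟩ | ⟨rfl, rfl⟩
  · exact hB
  · rw [conicL9, line_swap]; exact hB

/-- Lemma 5.1 at the homological level: let `F₁, …, F₈` be classes in `L₉` such that
(i) each `F_k` has the form `a_kH − (a_k−1)E_j − Σ_{i ∈ S} Eᵢ` with `0 ≤ a_k ≤ 3`,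
`j ∉ S`, `|S| = 2a_k + 1` (the form of a symplectic `(−2)`-sphere class forced by
Lemma 3.6 under the area condition); (ii) `F_j·F_k = 0` for `j ≠ k`; (iii) with
respect to reduced area data `(h, e)` there are `δ₁, δ₂` with `δ₂ < δ₁ < 2δ₂` and
`7δᵢ < 3h − Σᵢ eᵢ`, such that exactly one `F_k` has area `δ₁` and the remaining
seven have area `δ₂`. Then, up to reordering, the classes are as in one of the
three cases (a), (b), (c). -/
theorem stmt15 (h : ℝ) (e : Fin 9 → ℝ)
    (he : ∀ i, 0 < e i)
    (hmono : ∀ i j : Fin 9, i ≤ j → e j ≤ e i)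
    (h2pt : ∀ i j : Fin 9, i ≠ j → 0 < h - e i - e j)
    (h3pt : ∀ i j k : Fin 9, i ≠ j → i ≠ k → j ≠ k → 0 ≤ h - e i - e j - e k)
    (F : Fin 8 → ℤ × (Fin 9 → ℤ))
    (hform : ∀ k, ∃ (a : ℤ) (j : Fin 9) (S : Finset (Fin 9)),
      0 ≤ a ∧ a ≤ 3 ∧ j ∉ S ∧ (S.card : ℤ) = 2 * a + 1 ∧
      (F k).1 = a ∧
      (F k).2 = fun x => if x = j then -(a - 1) else if x ∈ S then -1 else 0)
    (hperp : ∀ j k : Fin 8, j ≠ k → interL9 (F j) (F k) = 0)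
    (δ₁ δ₂ : ℝ) (hδ21 : δ₂ < δ₁) (hδ12 : δ₁ < 2 * δ₂)
    (hδ1K : 7 * δ₁ < 3 * h - ∑ i, e i) (hδ2K : 7 * δ₂ < 3 * h - ∑ i, e i)
    (k₀ : Fin 8)
    (harea1 : areaL9 h e (F k₀) = δ₁)
    (harea2 : ∀ k, k ≠ k₀ → areaL9 h e (F k) = δ₂) :
    ∃ σ : Equiv.Perm (Fin 8),
      (∃ i : Fin 8 → Fin 9, Function.Injective i ∧
        F (σ 0) = cubicL9 i ∧
        F (σ 1) = lineL9 (i 1) (i 2) (i 3) ∧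
        F (σ 2) = lineL9 (i 1) (i 4) (i 5) ∧
        F (σ 3) = lineL9 (i 1) (i 6) (i 7) ∧
        F (σ 4) = lineL9 (i 2) (i 4) (i 6) ∧
        F (σ 5) = lineL9 (i 2) (i 5) (i 7) ∧
        F (σ 6) = lineL9 (i 3) (i 4) (i 7) ∧
        F (σ 7) = lineL9 (i 3) (i 5) (i 6)) ∨
      (∃ l : Fin 9 → Fin 9, Function.Injective l ∧
        F (σ 0) = lineL9 (l 0) (l 1) (l 2) ∧
        F (σ 1) = lineL9 (l 0) (l 3) (l 4) ∧
        F (σ 2) = lineL9 (l 0) (l 5) (l 6) ∧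
        F (σ 3) = lineL9 (l 1) (l 3) (l 5) ∧
        F (σ 4) = lineL9 (l 2) (l 4) (l 5) ∧
        F (σ 5) = lineL9 (l 1) (l 4) (l 6) ∧
        F (σ 6) = lineL9 (l 2) (l 3) (l 6) ∧
        F (σ 7) = diffL9 (l 7) (l 8)) ∨
      (∃ l : Fin 9 → Fin 9, Function.Injective l ∧
        F (σ 0) = lineL9 (l 0) (l 1) (l 2) ∧
        F (σ 1) = lineL9 (l 0) (l 3) (l 4) ∧
        F (σ 2) = lineL9 (l 0) (l 5) (l 6) ∧
        F (σ 3) = lineL9 (l 0) (l 7) (l 8) ∧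
        F (σ 4) = diffL9 (l 1) (l 2) ∧
        F (σ 5) = diffL9 (l 3) (l 4) ∧
        F (σ 6) = diffL9 (l 5) (l 6) ∧
        F (σ 7) = diffL9 (l 7) (l 8)) := by
  choose n hn using fun k => exists_code (F k) (hform k)
  have hpc : ∀ j k, j ≠ k → n j ≠ n k ∧ compat (n j) (n k) = true := fun j k hjk =>
    compat_of_perp _ _ _ _ (hn j) (hn k) (hperp j k hjk)
  have hmem : ∀ k, n k ∈ cands := by
    intro k
    rcases hn k with ⟨a, b, c, h1, h2, h3, he', _⟩ | ⟨a, b, h1, he', _⟩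
    · rw [he']; exact enc3_mem _ _ _ h1 h2 h3
    · rw [he']; exact enc2_mem _ _ h1
  have hinj : Function.Injective n := by
    intro j k hjk
    by_contra hne
    exact (hpc j k hne).1 hjk
  obtain ⟨σ, l, hl, hcase⟩ := classify n hinj hmem (fun j k hjk => (hpc j k hjk).2)
  have hG : ∀ j, areaL9 h e (F (σ j)) = if j = σ.symm k₀ then δ₁ else δ₂ := by
    intro j
    split_ifs with hj
    · rw [hj, Equiv.apply_symm_apply]; exact harea1
    · exact harea2 _ fun hh => hj ((Equiv.eq_symm_apply σ).2 hh)
  rcases hcase with hB | hC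
  · have L3 : ∀ (j : Fin 8) (a b c : Fin 9), some (enc3 (l a) (l b) (l c)) = some (n (σ j)) →
        F (σ j) = lineL9 (l a) (l b) (l c) ∨ F (σ j) = conicL9 (l a) (l b) (l c) :=
      fun j a b c hh => line_of_code _ _ _ _ _ (hn (σ j)) (Option.some.inj hh).symm
    have g0 := L3 0 0 1 2 (hB 0)
    have g1 := L3 1 0 3 4 (hB 1)
    have g2 := L3 2 0 5 6 (hB 2)
    have g3 := L3 3 1 3 5 (hB 3)
    have g4 := L3 4 2 4 5 (hB 4)
    have g5 := L3 5 1 4 6 (hB 5)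
    have g6 := L3 6 2 3 6 (hB 6)
    obtain ⟨c, d, hcd, g7⟩ := orient _ l 7 8 (diff_of_code _ _ _ _ (hl.ne (by decide)) (hn (σ 7))
      (Option.some.inj (hB 7)).symm)
    have hp : Function.Injective (![0, 1, 2, 3, 4, 5, 6, c, d] : Fin 9 → Fin 9) := by
      rcases hcd with ⟨rfl, rfl⟩ | ⟨rfl, rfl⟩ <;> decide
    have hl' := hl.comp hp
    obtain ⟨f0, f1, f2, f3, f4, f5, f6⟩ := finalB h3pt hδ21 hδ12 hδ1K (fun j => F (σ j)) _ hG _ hl'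
      g0 g1 g2 g3 g4 g5 g6 g7
    rcases g7 with g7 | g7
    · exact ⟨σ, Or.inr (Or.inl ⟨_, hl', f0, f1, f2, f3, f4, f5, f6, g7⟩)⟩
    · have hi8 : Function.Injective (![7, 0, 1, 2, 3, 4, 5, 6] : Fin 8 → Fin 9) := by decide
      have hcub := cub_eq_cubic _ hl'
      refine ⟨(Equiv.ofBijective (![7, 0, 1, 2, 3, 5, 6, 4] : Fin 8 → Fin 8) (by decide)).trans σ,
        Or.inl ⟨_, hl'.comp hi8, g7.trans hcub, f0, f1, f2, f3, f5, f6, f4⟩⟩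
  · have L3 : ∀ (j : Fin 8) (a b c : Fin 9), some (enc3 (l a) (l b) (l c)) = some (n (σ j)) →
        F (σ j) = lineL9 (l a) (l b) (l c) ∨ F (σ j) = conicL9 (l a) (l b) (l c) :=
      fun j a b c hh => line_of_code _ _ _ _ _ (hn (σ j)) (Option.some.inj hh).symm
    have L2 : ∀ (j : Fin 8) (a b : Fin 9), a ≠ b → some (enc2 (l a) (l b)) = some (n (σ j)) → _ :=
      fun j a b hab hh => orient _ l a b (diff_of_code _ _ _ _ (hl.ne hab) (hn (σ j))
        (Option.some.inj hh).symm)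
    obtain ⟨c1, d1, o1, g4⟩ := L2 4 1 2 (by decide) (hC 4)
    obtain ⟨c2, d2, o2, g5⟩ := L2 5 3 4 (by decide) (hC 5)
    obtain ⟨c3, d3, o3, g6⟩ := L2 6 5 6 (by decide) (hC 6)
    obtain ⟨c4, d4, o4, g7⟩ := L2 7 7 8 (by decide) (hC 7)
    have g0 := line_orient _ l _ _ _ _ _ o1 (L3 0 0 1 2 (hC 0))
    have g1 := line_orient _ l _ _ _ _ _ o2 (L3 1 0 3 4 (hC 1))
    have g2 := line_orient _ l _ _ _ _ _ o3 (L3 2 0 5 6 (hC 2))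
    have g3 := line_orient _ l _ _ _ _ _ o4 (L3 3 0 7 8 (hC 3))
    have hp : Function.Injective (![0, c1, d1, c2, d2, c3, d3, c4, d4] : Fin 9 → Fin 9) := by
      clear g0 g1 g2 g3 g4 g5 g6 g7
      rcases o1 with ⟨rfl, rfl⟩ | ⟨rfl, rfl⟩ <;> rcases o2 with ⟨rfl, rfl⟩ | ⟨rfl, rfl⟩ <;>
        rcases o3 with ⟨rfl, rfl⟩ | ⟨rfl, rfl⟩ <;> rcases o4 with ⟨rfl, rfl⟩ | ⟨rfl, rfl⟩ <;> decide
    have hl' := hl.comp hp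
    exact ⟨σ, Or.inr (Or.inr ⟨_, hl', finalC h3pt hδ21 hδ12 hδ1K (fun j => F (σ j)) _ hG _ hl'
      g0 g1 g2 g3 g4 g5 g6 g7⟩)⟩
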